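/- arXiv:1212.4915 — 2 statements merged into one kernel-verified Lean document; each statement's English description precedes it below -/
import Mathlib

section
/- Theorem 1(i) (first-order condition for Nash equilibrium of the two-stage pricing game): Let d, e be positive reals and c = d + e. Let o, C_ISP, C_CP, F_ad : ℝ → ℝ be differentiable and let h : ℝ → ℝ be differentiable with h(o(v)) = v for all v and o(h(u)) = u for all u. Suppose (p_b*, p_s*) is an interior Nash equilibrium, i.e. the function p_b ↦ U_ISP(p_b, p_s*) has a local maximum at p_b* and the function p_s ↦ U_CP(p_b*, p_s) has a local maximum at p_s*. Set v* = h(d·p_b* + p_s*). Then o(v*) + Φ₁(v*) + Φ₂(v*) = 0. -/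
/-!
Both profits have the form `h (a p + b) (k p + l) + G (h (a p + b))` in the firm's own price `p`:
demand times unit margin plus a net revenue depending on traffic only. Since `o' (v) h' (u) = 1` at
`v = h u`, multiplying the critical-point equation by `o' (v)` eliminates `h'`. For the ISP this
leaves `c p_b + Φ₁ v = 0` and for the CP `p_s - e p_b + Φ₂ v = 0`; the two add up to the claim
because `c p_b + (p_s - e p_b) = d p_b + p_s = o v`.
-/

open scoped Topology

theorem deriv_mul_deriv_eq_one_of_eventually_leftInverse {𝕜 : Type*} [NontriviallyNormedField 𝕜]
    {f g : 𝕜 → 𝕜} {x : 𝕜} (hf : DifferentiableAt 𝕜 f (g x)) (hg : DifferentiableAt 𝕜 g x)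
    (hfg : ∀ᶠ y in 𝓝 x, f (g y) = y) : deriv f (g x) * deriv g x = 1 := by
  have hcomp : f ∘ g =ᶠ[𝓝 x] id := hfg
  rw [← deriv_comp x hf hg, hcomp.deriv_eq, deriv_id]

/-- The profit, as a function of its own price `p`, of a firm that meets demand `h (a * p + b)`,
earns the margin `k * p + l` on each unit of traffic, and has a further net revenue `G` (income
minus cost) depending only on the traffic. The coefficients `b` and `l` absorb the prices set by
other firms, so that the ISP and the CP are both instances. -/
def affineProfit (h G : ℝ → ℝ) (a b k l p : ℝ) : ℝ :=
  h (a * p + b) * (k * p + l) + G (h (a * p + b))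

section FirstOrderConditions

variable {o h : ℝ → ℝ} {u : ℝ}

theorem hasDerivAt_affineProfit {G : ℝ → ℝ} {h' G' a b k l p : ℝ} (hu : a * p + b = u)
    (hh : HasDerivAt h h' u) (hG : HasDerivAt G G' (h u)) :
    HasDerivAt (affineProfit h G a b k l) (a * h' * (k * p + l + G') + k * h u) p := by
  subst hu
  have affine (m n : ℝ) : HasDerivAt (fun q ↦ m * q + n) m p := by
    simpa using ((hasDerivAt_id p).const_mul m).add_const n
  have demand : HasDerivAt (fun q ↦ h (a * q + b)) (h' * a) p := hh.comp p (affine a b)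
  exact ((demand.mul (affine k l)).add (hG.comp p demand)).congr_deriv (by ring)

theorem affineProfit_first_order_condition {G : ℝ → ℝ} {a b k l p : ℝ}
    (ho : DifferentiableAt ℝ o (h u)) (hh : DifferentiableAt ℝ h u)
    (hoh : ∀ᶠ y in 𝓝 u, o (h y) = y) (hu : a * p + b = u)
    (hG : DifferentiableAt ℝ G (h u)) (hext : IsLocalExtr (affineProfit h G a b k l) p) :
    a * (k * p + l + deriv G (h u)) + k * h u * deriv o (h u) = 0 := by
  have critical : a * deriv h u * (k * p + l + deriv G (h u)) + k * h u = 0 :=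
    hext.hasDerivAt_eq_zero (hasDerivAt_affineProfit hu hh.hasDerivAt hG.hasDerivAt)
  have reciprocal : deriv o (h u) * deriv h u = 1 :=
    deriv_mul_deriv_eq_one_of_eventually_leftInverse ho hh hoh
  linear_combination deriv o (h u) * critical - a * (k * p + l + deriv G (h u)) * reciprocal

theorem isp_first_order_condition {C : ℝ → ℝ} {c d p_b p_s : ℝ}
    (ho : DifferentiableAt ℝ o (h u)) (hh : DifferentiableAt ℝ h u)
    (hoh : ∀ᶠ y in 𝓝 u, o (h y) = y) (hd : d ≠ 0)
    (hu : d * p_b + p_s = u) (hC : DifferentiableAt ℝ C (h u))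
    (hext : IsLocalExtr (fun p ↦ c * h (d * p + p_s) * p - C (h (d * p + p_s))) p_b) :
    c * p_b + (c * h u * (1 / d) * deriv o (h u) - deriv C (h u)) = 0 := by
  have profit_eq : (fun p ↦ c * h (d * p + p_s) * p - C (h (d * p + p_s)))
      = affineProfit h (-C) d p_s c 0 := by
    ext p
    simp only [affineProfit, Pi.neg_apply]
    ring
  have foc := affineProfit_first_order_condition ho hh hoh hu hC.neg (profit_eq ▸ hext)
  rw [deriv.neg] at foc
  field_simp
  linear_combination foc

theorem cp_first_order_condition {F C : ℝ → ℝ} {d e p_b p_s : ℝ}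
    (ho : DifferentiableAt ℝ o (h u)) (hh : DifferentiableAt ℝ h u)
    (hoh : ∀ᶠ y in 𝓝 u, o (h y) = y) (hu : d * p_b + p_s = u)
    (hF : DifferentiableAt ℝ F (h u)) (hC : DifferentiableAt ℝ C (h u))
    (hext : IsLocalExtr (fun p ↦ h (d * p_b + p) * p + F (h (d * p_b + p))
      - e * h (d * p_b + p) * p_b - C (h (d * p_b + p))) p_s) :
    p_s - e * p_b + (h u * deriv o (h u) + deriv F (h u) - deriv C (h u)) = 0 := by
  have profit_eq : (fun p ↦ h (d * p_b + p) * p + F (h (d * p_b + p))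
      - e * h (d * p_b + p) * p_b - C (h (d * p_b + p)))
      = affineProfit h (F - C) 1 (d * p_b) 1 (-(e * p_b)) := by
    ext p
    simp only [affineProfit, Pi.sub_apply, one_mul, add_comm p]
    ring
  have foc := affineProfit_first_order_condition ho hh hoh (by linear_combination hu)
    (hF.sub hC) (profit_eq ▸ hext)
  rw [deriv_sub hF hC] at foc
  linear_combination foc

end FirstOrderConditions

theorem theorem1_first_order_condition_general
    {d e c : ℝ} (hd : d ≠ 0) (hc : c = d + e)
    {o C_ISP C_CP F_ad h : ℝ → ℝ} {U_ISP U_CP : ℝ → ℝ → ℝ}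
    (hU_ISP : ∀ p_b p_s : ℝ,
      U_ISP p_b p_s = c * h (d * p_b + p_s) * p_b - C_ISP (h (d * p_b + p_s)))
    (hU_CP : ∀ p_b p_s : ℝ,
      U_CP p_b p_s = h (d * p_b + p_s) * p_s + F_ad (h (d * p_b + p_s))
        - e * h (d * p_b + p_s) * p_b - C_CP (h (d * p_b + p_s)))
    {Φ₁ Φ₂ : ℝ → ℝ}
    (hΦ₁ : ∀ v : ℝ, Φ₁ v = c * v * (1 / d) * deriv o v - deriv C_ISP v)
    (hΦ₂ : ∀ v : ℝ, Φ₂ v = v * deriv o v + deriv F_ad v - deriv C_CP v)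
    {p_b p_s v : ℝ} (hv : v = h (d * p_b + p_s))
    (ho : DifferentiableAt ℝ o v) (hC_ISP : DifferentiableAt ℝ C_ISP v)
    (hC_CP : DifferentiableAt ℝ C_CP v) (hF_ad : DifferentiableAt ℝ F_ad v)
    (hh : DifferentiableAt ℝ h (d * p_b + p_s))
    (hoh : ∀ᶠ u in 𝓝 (d * p_b + p_s), o (h u) = u)
    (hextISP : IsLocalExtr (fun p ↦ U_ISP p p_s) p_b)
    (hextCP : IsLocalExtr (fun p ↦ U_CP p_b p) p_s) :
    o v + Φ₁ v + Φ₂ v = 0 := by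
  subst hv
  simp only [hU_ISP] at hextISP
  simp only [hU_CP] at hextCP
  have focISP : c * p_b + Φ₁ (h (d * p_b + p_s)) = 0 := by
    rw [hΦ₁]
    exact isp_first_order_condition ho hh hoh hd rfl hC_ISP hextISP
  have focCP : p_s - e * p_b + Φ₂ (h (d * p_b + p_s)) = 0 := by
    rw [hΦ₂]
    exact cp_first_order_condition ho hh hoh rfl hF_ad hC_CP hextCP
  have inverse : o (h (d * p_b + p_s)) = d * p_b + p_s := hoh.self_of_nhds
  linear_combination focISP + focCP + inverse - p_b * hc

/-- Theorem 1(i): first-order condition for an interior Nash equilibrium of the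
two-stage pricing game between the ISP and the CP. -/
theorem theorem1_first_order_condition
    (d e c : ℝ) (hd : 0 < d) (he : 0 < e) (hc : c = d + e)
    (o C_ISP C_CP F_ad h : ℝ → ℝ)
    (ho : Differentiable ℝ o) (hC_ISP : Differentiable ℝ C_ISP)
    (hC_CP : Differentiable ℝ C_CP) (hF_ad : Differentiable ℝ F_ad)
    (hh : Differentiable ℝ h)
    (hinv₁ : ∀ v : ℝ, h (o v) = v) (hinv₂ : ∀ u : ℝ, o (h u) = u)
    (U_ISP U_CP : ℝ → ℝ → ℝ)
    (hU_ISP : ∀ p_b p_s : ℝ,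
      U_ISP p_b p_s = c * h (d * p_b + p_s) * p_b - C_ISP (h (d * p_b + p_s)))
    (hU_CP : ∀ p_b p_s : ℝ,
      U_CP p_b p_s = h (d * p_b + p_s) * p_s + F_ad (h (d * p_b + p_s))
        - e * h (d * p_b + p_s) * p_b - C_CP (h (d * p_b + p_s)))
    (Φ₁ Φ₂ : ℝ → ℝ)
    (hΦ₁ : ∀ v : ℝ, Φ₁ v = c * v * (1 / d) * deriv o v - deriv C_ISP v)
    (hΦ₂ : ∀ v : ℝ, Φ₂ v = v * deriv o v + deriv F_ad v - deriv C_CP v)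
    (p_b' p_s' : ℝ)
    (hmaxISP : IsLocalMax (fun p_b => U_ISP p_b p_s') p_b')
    (hmaxCP : IsLocalMax (fun p_s => U_CP p_b' p_s) p_s')
    (v' : ℝ) (hv' : v' = h (d * p_b' + p_s')) :
    o v' + Φ₁ v' + Φ₂ v' = 0 :=
  theorem1_first_order_condition_general hd.ne' hc hU_ISP hU_CP hΦ₁ hΦ₂ hv' (ho _) (hC_ISP _)
    (hC_CP _) (hF_ad _) (hh _) (.of_forall hinv₂) hmaxISP.isExtr hmaxCP.isExtr
end

section
/- Theorem 1(ii) (second-order condition for Nash equilibrium of the two-stage pricing game): Let d, e be positive reals and c = d + e. Let o, C_ISP, C_CP, F_ad : ℝ → ℝ be twice differentiable and let h : ℝ → ℝ be twice differentiable with h(o(v)) = v for all v and o(h(u)) = u for all u. Suppose (p_b*, p_s*) satisfies the strict interior optimality conditions: the first derivative of p_b ↦ U_ISP(p_b, p_s*) vanishes at p_b* and its second derivative at p_b* is negative, and the first derivative of p_s ↦ U_CP(p_b*, p_s) vanishes at p_s* and its second derivative at p_s* is negative. Set v* = h(d·p_b* + p_s*). Then (c/d)·(deriv o v*) + (deriv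 Φ₁ v*) < 0 and (deriv o v*) + (deriv Φ₂ v*) < 0. -/
/-! For fixed rival price, the profit of either provider is a function `G` of the induced demand
composed with the smooth change of coordinates `φ : price ↦ demand`. The derivative of `φ` never
vanishes because `h` and `o` are mutually inverse, so a critical point of `G ∘ φ` is one of `G`;
there the term `G' φ''` of `(G ∘ φ)''` drops out and `(G ∘ φ)'' = φ' ^ 2 * G''`. The two claimed
expressions are the second derivatives `G''` of the ISP and of the CP. -/

open Filter Topology

theorem deriv_deriv_scomp_of_deriv_eq_zero {𝕜 E : Type*} [NontriviallyNormedField 𝕜]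
    [NormedAddCommGroup E] [NormedSpace 𝕜 E] {g : 𝕜 → E} {φ : 𝕜 → 𝕜} {x : 𝕜}
    (hg : ∀ᶠ v in 𝓝 (φ x), DifferentiableAt 𝕜 g v) (hg' : DifferentiableAt 𝕜 (deriv g) (φ x))
    (hφ : ∀ᶠ y in 𝓝 x, DifferentiableAt 𝕜 φ y) (hφ' : DifferentiableAt 𝕜 (deriv φ) x)
    (hcrit : deriv g (φ x) = 0) :
    deriv (deriv (g ∘ φ)) x = deriv φ x ^ 2 • deriv (deriv g) (φ x) := by
  have hφx : DifferentiableAt 𝕜 φ x := hφ.self_of_nhds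
  have hchain : deriv (g ∘ φ) =ᶠ[𝓝 x] fun y => deriv φ y • (deriv g ∘ φ) y := by
    filter_upwards [hφ, hφx.continuousAt.eventually hg] with y hφy hgy
    exact deriv.scomp y hgy hφy
  have hproduct := hφ'.hasDerivAt.smul (hg'.hasDerivAt.scomp x hφx.hasDerivAt)
  rw [hchain.deriv_eq]
  refine hproduct.deriv.trans ?_
  simp only [Function.comp_apply, hcrit, smul_zero, add_zero, smul_smul, sq]

theorem deriv_deriv_neg_of_comp {g φ : ℝ → ℝ} {x : ℝ}
    (hg : ∀ᶠ v in 𝓝 (φ x), DifferentiableAt ℝ g v) (hg' : DifferentiableAt ℝ (deriv g) (φ x))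
    (hφ : ∀ᶠ y in 𝓝 x, DifferentiableAt ℝ φ y) (hφ' : DifferentiableAt ℝ (deriv φ) x)
    (hφ_ne : deriv φ x ≠ 0) (hfirst : deriv (g ∘ φ) x = 0)
    (hsecond : deriv (deriv (g ∘ φ)) x < 0) :
    deriv (deriv g) (φ x) < 0 := by
  have hcrit : deriv g (φ x) = 0 := by
    rw [deriv_comp x hg.self_of_nhds hφ.self_of_nhds] at hfirst
    exact (mul_eq_zero.mp hfirst).resolve_right hφ_ne
  rw [deriv_deriv_scomp_of_deriv_eq_zero hg hg' hφ hφ' hcrit] at hsecond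
  exact (smul_neg_iff_of_pos_left (by positivity)).mp hsecond

theorem deriv_ne_zero_of_leftInverse {𝕜 : Type*} [NontriviallyNormedField 𝕜] {f g : 𝕜 → 𝕜}
    {x : 𝕜} (hf : DifferentiableAt 𝕜 f (g x)) (hg : DifferentiableAt 𝕜 g x)
    (hfg : Function.LeftInverse f g) : deriv f (g x) ≠ 0 := fun hzero =>
  not_differentiableAt_of_local_left_inverse_hasDerivAt_zero (hzero ▸ hf.hasDerivAt)
    (.of_forall hfg) hg

/-- The profit of a provider as a function of the traffic demand `v` it induces. The demand `v`
is sold at the unit margin `a * o v + b`, obtained by solving `h (d * p_b + p_s) = v` for the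
provider's own price; `R` collects the revenues and costs that depend on `v` alone. -/
def demandProfit (o R : ℝ → ℝ) (a b v : ℝ) : ℝ := v * (a * o v + b) + R v

/-- The part of the marginal profit with respect to demand that is left after removing the unit
margin. It is the function `Φ₁` for the ISP and `Φ₂` for the CP. -/
noncomputable def marginalProfitNetOfMargin (o R : ℝ → ℝ) (a v : ℝ) : ℝ :=
  a * v * deriv o v + deriv R v

section Demand

variable {o R : ℝ → ℝ} {a b : ℝ}

theorem hasDerivAt_demandProfit {v : ℝ} (ho : DifferentiableAt ℝ o v)
    (hR : DifferentiableAt ℝ R v) :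
    HasDerivAt (demandProfit o R a b) (a * o v + b + marginalProfitNetOfMargin o R a v) v := by
  have hmargin := (ho.hasDerivAt.const_mul a).add_const b
  refine (((hasDerivAt_id v).mul hmargin).add hR.hasDerivAt).congr_deriv ?_
  simp only [marginalProfitNetOfMargin, id]
  ring

theorem hasDerivAt_deriv_demandProfit {v : ℝ}
    (ho : ∀ᶠ w in 𝓝 v, DifferentiableAt ℝ o w) (ho' : DifferentiableAt ℝ (deriv o) v)
    (hR : ∀ᶠ w in 𝓝 v, DifferentiableAt ℝ R w) (hR' : DifferentiableAt ℝ (deriv R) v) :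
    HasDerivAt (deriv (demandProfit o R a b))
      (a * deriv o v + deriv (marginalProfitNetOfMargin o R a) v) v := by
  have hderiv : deriv (demandProfit o R a b) =ᶠ[𝓝 v]
      fun w => a * o w + b + marginalProfitNetOfMargin o R a w := by
    filter_upwards [ho, hR] with w how hRw
    exact (hasDerivAt_demandProfit how hRw).deriv
  have hnet : DifferentiableAt ℝ (marginalProfitNetOfMargin o R a) v := by
    unfold marginalProfitNetOfMargin
    fun_prop
  exact (((ho.self_of_nhds.hasDerivAt.const_mul a).add_const b).add
    hnet.hasDerivAt).congr_of_eventuallyEq hderiv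

theorem demandProfit_second_order_condition {h ℓ U : ℝ → ℝ} {k p : ℝ} (hk : k ≠ 0)
    (hℓ : ∀ y, HasDerivAt ℓ k y)
    (ho : Differentiable ℝ o) (ho' : Differentiable ℝ (deriv o))
    (hR : Differentiable ℝ R) (hR' : Differentiable ℝ (deriv R))
    (hh : Differentiable ℝ h) (hh' : Differentiable ℝ (deriv h))
    (hho : Function.LeftInverse h o) (hoh : Function.RightInverse h o)
    (hU : ∀ y, U y = demandProfit o R a b (h (ℓ y)))
    (hfirst : deriv U p = 0) (hsecond : deriv (deriv U) p < 0) :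
    a * deriv o (h (ℓ p)) + deriv (marginalProfitNetOfMargin o R a) (h (ℓ p)) < 0 := by
  have hG (v : ℝ) : DifferentiableAt ℝ (demandProfit o R a b) v :=
    (hasDerivAt_demandProfit (ho v) (hR v)).differentiableAt
  have hG' := hasDerivAt_deriv_demandProfit (a := a) (b := b) (v := h (ℓ p))
    (.of_forall ho) (ho' _) (.of_forall hR) (hR' _)
  have hφ (y : ℝ) : HasDerivAt (h ∘ ℓ) (deriv h (ℓ y) * k) y := (hh _).hasDerivAt.comp y (hℓ y)
  have hφ' : deriv (h ∘ ℓ) = fun y => deriv h (ℓ y) * k := funext fun y => (hφ y).deriv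
  have hφ'_diff : DifferentiableAt ℝ (deriv (h ∘ ℓ)) p :=
    hφ' ▸ ((hh' _).comp p (hℓ p).differentiableAt).mul_const k
  have hh_ne : deriv h (ℓ p) ≠ 0 := by
    simpa only [hoh (ℓ p)] using deriv_ne_zero_of_leftInverse (hh _) (ho (h (ℓ p))) hho
  have hφ_ne : deriv (h ∘ ℓ) p ≠ 0 := by simpa only [hφ'] using mul_ne_zero hh_ne hk
  obtain rfl : U = demandProfit o R a b ∘ (h ∘ ℓ) := funext hU
  rw [← hG'.deriv]
  exact deriv_deriv_neg_of_comp (φ := h ∘ ℓ) (.of_forall hG) hG'.differentiableAt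
    (.of_forall fun y => (hφ y).differentiableAt) hφ'_diff hφ_ne hfirst hsecond

end Demand

/-- Theorem 1(ii): second-order condition for an interior Nash equilibrium of the
two-stage pricing game between the ISP and the CP. -/
theorem theorem1_second_order_condition
    (d e c : ℝ) (hd : 0 < d) (he : 0 < e) (hc : c = d + e)
    (o C_ISP C_CP F_ad h : ℝ → ℝ)
    (ho : Differentiable ℝ o) (ho' : Differentiable ℝ (deriv o))
    (hC_ISP : Differentiable ℝ C_ISP) (hC_ISP' : Differentiable ℝ (deriv C_ISP))
    (hC_CP : Differentiable ℝ C_CP) (hC_CP' : Differentiable ℝ (deriv C_CP))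
    (hF_ad : Differentiable ℝ F_ad) (hF_ad' : Differentiable ℝ (deriv F_ad))
    (hh : Differentiable ℝ h) (hh' : Differentiable ℝ (deriv h))
    (hinv₁ : ∀ v : ℝ, h (o v) = v) (hinv₂ : ∀ u : ℝ, o (h u) = u)
    (U_ISP U_CP : ℝ → ℝ → ℝ)
    (hU_ISP : ∀ p_b p_s : ℝ,
      U_ISP p_b p_s = c * h (d * p_b + p_s) * p_b - C_ISP (h (d * p_b + p_s)))
    (hU_CP : ∀ p_b p_s : ℝ,
      U_CP p_b p_s = h (d * p_b + p_s) * p_s + F_ad (h (d * p_b + p_s))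
        - e * h (d * p_b + p_s) * p_b - C_CP (h (d * p_b + p_s)))
    (Φ₁ Φ₂ : ℝ → ℝ)
    (hΦ₁ : ∀ v : ℝ, Φ₁ v = c * v * (1 / d) * deriv o v - deriv C_ISP v)
    (hΦ₂ : ∀ v : ℝ, Φ₂ v = v * deriv o v + deriv F_ad v - deriv C_CP v)
    (p_b' p_s' : ℝ)
    (hfoISP : deriv (fun p_b => U_ISP p_b p_s') p_b' = 0)
    (hsoISP : deriv (deriv (fun p_b => U_ISP p_b p_s')) p_b' < 0)
    (hfoCP : deriv (fun p_s => U_CP p_b' p_s) p_s' = 0)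
    (hsoCP : deriv (deriv (fun p_s => U_CP p_b' p_s)) p_s' < 0)
    (v' : ℝ) (hv' : v' = h (d * p_b' + p_s')) :
    (c / d) * deriv o v' + deriv Φ₁ v' < 0 ∧
    deriv o v' + deriv Φ₂ v' < 0 := by
  subst v'
  have hΦ₁_eq : Φ₁ = marginalProfitNetOfMargin o (-C_ISP) (c / d) := funext fun v => by
    rw [hΦ₁, marginalProfitNetOfMargin, deriv.neg]
    ring
  have hΦ₂_eq : Φ₂ = marginalProfitNetOfMargin o (F_ad - C_CP) 1 := funext fun v => by
    rw [hΦ₂, marginalProfitNetOfMargin, deriv_sub (hF_ad v) (hC_CP v)]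
    ring
  have hderiv_sub : deriv (F_ad - C_CP) = deriv F_ad - deriv C_CP :=
    funext fun v => deriv_sub (hF_ad v) (hC_CP v)
  constructor
  · rw [hΦ₁_eq]
    refine demandProfit_second_order_condition (b := -(c / d * p_s')) (ℓ := (d * · + p_s')) hd.ne'
      (fun p_b => (hasDerivAt_const_mul d).add_const p_s') ho ho' hC_ISP.neg
      (deriv.neg' (f := C_ISP) ▸ hC_ISP'.neg) hh hh' hinv₁ hinv₂ (fun p_b => ?_) hfoISP hsoISP
    rw [hU_ISP, demandProfit, hinv₂, Pi.neg_apply]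
    field_simp
    ring
  · rw [hΦ₂_eq, ← one_mul (deriv o _)]
    refine demandProfit_second_order_condition (b := -((d + e) * p_b')) (ℓ := (d * p_b' + ·))
      one_ne_zero (fun p_s => (hasDerivAt_id p_s).const_add (d * p_b')) ho ho' (hF_ad.sub hC_CP)
      (hderiv_sub ▸ hF_ad'.sub hC_CP') hh hh' hinv₁ hinv₂ (fun p_s => ?_) hfoCP hsoCP
    rw [hU_CP, demandProfit, hinv₂, Pi.sub_apply]
    ring
end
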